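/- Suppose E⟨|R_{1,2}|^p⟩_β ≤ K/N^{p/2} for all N ≥ 1 and all β ∈ [0,b], for a constant K ≥ 0. Then there is a constant K' (depending only on K, b, p) such that for all β ∈ [0,b], r > 0, and N ≥ 1: P(|F_N(β) - β²/4| ≥ r) ≤ K'/(r² N^{p/2+1}). -/

import Mathlib

open MeasureTheory ProbabilityTheory

noncomputable section

/-- Spin configuration: `±1`-valued vector from a Boolean vector. -/
def spin {N : ℕ} (s : Fin N → Bool) (i : Fin N) : ℝ := if s i then 1 else -1

/-- Overlap `R_{1,2} = N⁻¹ Σᵢ σᵢ¹ σᵢ²`. -/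
def overlap {N : ℕ} (s t : Fin N → Bool) : ℝ := (∑ i, spin s i * spin t i) / N

/-- Pure `p`-spin Hamiltonian `H_N(σ) = N^{-(p-1)/2} Σ g_{i₁,…,i_p} σ_{i₁} ⋯ σ_{i_p}`. -/
def ham (N p : ℕ) (g : (Fin p → Fin N) → ℝ) (s : Fin N → Bool) : ℝ :=
  (∑ i : Fin p → Fin N, g i * ∏ j, spin s (i j)) / (N:ℝ) ^ (((p:ℝ) - 1) / 2)

/-- Disorder measure: i.i.d. standard Gaussians `g_{i₁,…,i_p}`. -/
def disorder (N p : ℕ) : Measure ((Fin p → Fin N) → ℝ) :=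
  Measure.pi fun _ => gaussianReal 0 1

/-- Free energy `F_N(β) = N⁻¹ log Σ_σ 2^{-N} exp(β H_N(σ)/√2)`. -/
def freeEnergy (N p : ℕ) (β : ℝ) (g : (Fin p → Fin N) → ℝ) : ℝ :=
  (1 / N) * Real.log (∑ s : Fin N → Bool,
    (1 / 2 ^ N) * Real.exp (β / Real.sqrt 2 * ham N p g s))

/-- Annealed two-replica Gibbs average `E ⟨R_{1,2}^p⟩_β`. -/
def gibbsAvgRp (N p : ℕ) (β : ℝ) : ℝ :=
  ∫ g, (∑ s1 : Fin N → Bool, ∑ s2 : Fin N → Bool,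
        Real.exp (β / Real.sqrt 2 * ham N p g s1)
          * Real.exp (β / Real.sqrt 2 * ham N p g s2) * overlap s1 s2 ^ p)
      / (∑ s : Fin N → Bool, Real.exp (β / Real.sqrt 2 * ham N p g s)) ^ 2
    ∂(disorder N p)

end

/-- Annealed two-replica Gibbs average `E ⟨|R_{1,2}|^p⟩_β`. -/
noncomputable def gibbsAvgAbsRp (N p : ℕ) (β : ℝ) : ℝ :=
  ∫ g, (∑ s1 : Fin N → Bool, ∑ s2 : Fin N → Bool,
        Real.exp (β / Real.sqrt 2 * ham N p g s1)
          * Real.exp (β / Real.sqrt 2 * ham N p g s2) * |overlap s1 s2| ^ p)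
      / (∑ s : Fin N → Bool, Real.exp (β / Real.sqrt 2 * ham N p g s)) ^ 2
    ∂(disorder N p)

/-!
As a function of the Gaussian disorder, `log ∑ exp (β H_N / √2)` has as gradient a Gibbs average,
whose squared norm is `(β² / 2) N ⟨R_{1,2}^p⟩_β`. The Gaussian Poincaré inequality therefore gives
`Var F_N(β) ≤ β² / (2N) E⟨R_{1,2}^p⟩_β`, while Gaussian integration by parts in the `β`-derivative
gives `E F_N(β) = β² / 4 - (1/2) ∫₀^β l E⟨R_{1,2}^p⟩_l dl`. Chebyshev's inequality, centred at
`β² / 4`, combines the two.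

For the Poincaré inequality, rotate one of two independent copies into the other: the correlation
`E f(X) f(cos θ X + sin θ Y)` decreases from `E f²` to `(E f)²` as `θ` goes from `0` to `π / 2`,
and integration by parts shows that its derivative is at least `- sin θ E |∇f|²`.
-/

open Filter Topology
open scoped NNReal ENNReal Matrix

section GaussianIntegrationByParts

lemma hasDerivAt_gaussianPDFReal (m : ℝ) {v : ℝ≥0} (hv : v ≠ 0) (x : ℝ) :
    HasDerivAt (gaussianPDFReal m v) (-((x - m) / v) * gaussianPDFReal m v x) x := by
  have hexponent : HasDerivAt (fun y : ℝ => -(y - m) ^ 2 / (2 * v)) (-((x - m) / v)) x := by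
    refine ((((hasDerivAt_id x).sub_const m).pow 2).neg.div_const (2 * (v : ℝ))).congr_deriv ?_
    simp only [id, Nat.cast_ofNat, Nat.add_one_sub_one, pow_one]
    field_simp
  rw [gaussianPDFReal_def]
  exact (hexponent.exp.const_mul _).congr_deriv (by ring)

lemma integrable_gaussianReal_iff {m : ℝ} {v : ℝ≥0} (hv : v ≠ 0) {f : ℝ → ℝ} :
    Integrable f (gaussianReal m v) ↔ Integrable fun x => gaussianPDFReal m v x * f x := by
  rw [gaussianReal_of_var_ne_zero m hv, integrable_withDensity_iff_integrable_smul'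
    (measurable_gaussianPDF m v) (ae_of_all _ fun _ => gaussianPDF_lt_top)]
  simp only [toReal_gaussianPDF, smul_eq_mul]

theorem integral_sub_mean_mul_gaussianReal {m : ℝ} {v : ℝ≥0} {f f' : ℝ → ℝ}
    (hf : ∀ x, HasDerivAt f (f' x) x) (hf_int : Integrable f (gaussianReal m v))
    (hxf_int : Integrable (fun x => (x - m) * f x) (gaussianReal m v))
    (hf'_int : Integrable f' (gaussianReal m v)) :
    ∫ x, (x - m) * f x ∂gaussianReal m v = v * ∫ x, f' x ∂gaussianReal m v := by
  rcases eq_or_ne v 0 with rfl | hv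
  · simp
  rw [integrable_gaussianReal_iff hv] at hf_int hxf_int hf'_int
  have hparts := integral_mul_deriv_eq_deriv_mul_of_integrable (u := gaussianPDFReal m v) (v := f)
    (fun x _ => hasDerivAt_gaussianPDFReal m hv x) (fun x _ => hf x) hf'_int
    ((hxf_int.const_mul (-(v : ℝ)⁻¹)).congr <| ae_of_all _ fun x => by
      simp only [Pi.mul_apply]; ring) hf_int
  simp only [integral_gaussianReal_eq_integral_smul hv, smul_eq_mul]
  rw [hparts, ← integral_neg, ← integral_const_mul]
  refine integral_congr_ae (ae_of_all _ fun x => ?_)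
  field_simp

variable {ι : Type*} [Fintype ι]

lemma measurePreserving_update_pi [DecidableEq ι] {X : ι → Type*} [∀ i, MeasurableSpace (X i)]
    (μ : ∀ i, Measure (X i)) [∀ i, IsProbabilityMeasure (μ i)] (i : ι) :
    MeasurePreserving (fun z : (∀ j, X j) × X i => Function.update z.1 i z.2)
      ((Measure.pi μ).prod (μ i)) (Measure.pi μ) := by
  have hmeas : Measurable fun z : (∀ j, X j) × X i => Function.update z.1 i z.2 := by
    refine measurable_pi_iff.2 fun j => ?_
    rcases eq_or_ne j i with rfl | hj
    · simpa using measurable_snd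
    · simp only [Function.update_of_ne hj]
      fun_prop
  refine ⟨hmeas, (Measure.pi_eq fun s hs => ?_).symm⟩
  have hpre : (fun z : (∀ j, X j) × X i => Function.update z.1 i z.2) ⁻¹' Set.univ.pi s
      = Set.univ.pi (Function.update s i Set.univ) ×ˢ s i := by
    ext z
    simp only [Set.mem_preimage, Set.mem_univ_pi, Set.mem_prod,
      Function.forall_update_iff z.1 (fun j y => y ∈ s j),
      Function.forall_update_iff s (fun j t => z.1 j ∈ t), Set.mem_univ, true_and]
    exact and_comm
  rw [Measure.map_apply hmeas (.univ_pi hs), hpre, Measure.prod_prod, Measure.pi_pi,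
    ← Finset.prod_erase_mul _ _ (Finset.mem_univ i),
    ← Finset.prod_erase_mul _ _ (Finset.mem_univ i)]
  simp only [Function.update_self, measure_univ, mul_one]
  congr 1
  refine Finset.prod_congr rfl fun j hj => ?_
  rw [Function.update_of_ne (Finset.ne_of_mem_erase hj)]

lemma integral_comp_of_measurePreserving {α β E : Type*} [MeasurableSpace α] [MeasurableSpace β]
    [NormedAddCommGroup E] [NormedSpace ℝ E] {μ : Measure α} {ν : Measure β} {φ : α → β}
    (hφ : MeasurePreserving φ μ ν) {g : β → E} (hg : AEStronglyMeasurable g ν) :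
    ∫ x, g (φ x) ∂μ = ∫ y, g y ∂ν := by
  rw [← hφ.map_eq] at hg ⊢
  exact (integral_map hφ.aemeasurable hg).symm

lemma integral_pi_eq_integral_integral_update [DecidableEq ι] {X : ι → Type*}
    [∀ i, MeasurableSpace (X i)] (μ : ∀ i, Measure (X i)) [∀ i, IsProbabilityMeasure (μ i)] (i : ι)
    {f : (∀ i, X i) → ℝ} (hf : Integrable f (Measure.pi μ)) :
    ∫ x, f x ∂Measure.pi μ = ∫ x, ∫ t, f (Function.update x i t) ∂μ i ∂Measure.pi μ := by
  have hupdate := measurePreserving_update_pi μ i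
  rw [← integral_comp_of_measurePreserving hupdate hf.1]
  exact integral_prod _ (hupdate.integrable_comp_of_integrable hf)

theorem integral_sub_mean_mul_pi_gaussianReal [DecidableEq ι] {m : ι → ℝ} {v : ι → ℝ≥0} (i : ι)
    {f f' : (ι → ℝ) → ℝ}
    (hf : ∀ x, HasDerivAt (fun t => f (Function.update x i t)) (f' x) (x i))
    (hf_int : Integrable f (Measure.pi fun j => gaussianReal (m j) (v j)))
    (hxf_int : Integrable (fun x => (x i - m i) * f x)
      (Measure.pi fun j => gaussianReal (m j) (v j)))
    (hf'_int : Integrable f' (Measure.pi fun j => gaussianReal (m j) (v j))) :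
    ∫ x, (x i - m i) * f x ∂(Measure.pi fun j => gaussianReal (m j) (v j))
      = v i * ∫ x, f' x ∂(Measure.pi fun j => gaussianReal (m j) (v j)) := by
  have ae_integrable_section {g : (ι → ℝ) → ℝ}
      (hg : Integrable g (Measure.pi fun j => gaussianReal (m j) (v j))) :=
    ((measurePreserving_update_pi _ i).integrable_comp_of_integrable hg).prod_right_ae
  rw [integral_pi_eq_integral_integral_update _ i hxf_int,
    integral_pi_eq_integral_integral_update _ i hf'_int, ← integral_const_mul]
  refine integral_congr_ae ?_
  filter_upwards [ae_integrable_section hf_int, ae_integrable_section hxf_int,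
    ae_integrable_section hf'_int] with x hx_f hx_xf hx_f'
  simp only [Function.comp_apply, Function.update_self] at hx_xf ⊢
  refine integral_sub_mean_mul_gaussianReal (fun t => ?_) hx_f hx_xf hx_f'
  simpa using hf (Function.update x i t)

end GaussianIntegrationByParts

section Gradient

variable {ι : Type*} [DecidableEq ι]

/-- The vector of partial derivatives of `f` at `x`. The space `ι → ℝ` carries the sup norm, so
Mathlib's `gradient` does not apply to it. -/
noncomputable def grad (f : (ι → ℝ) → ℝ) (x : ι → ℝ) : ι → ℝ :=
  fun i => fderiv ℝ f x (Pi.single i 1)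

section Finite

variable [Finite ι]

lemma grad_comp_add_smul {f : (ι → ℝ) → ℝ} (hf : Differentiable ℝ f) (a : ι → ℝ) (b : ℝ)
    (x : ι → ℝ) : grad (fun y => f (a + b • y)) x = b • grad f (a + b • x) := by
  cases nonempty_fintype ι
  funext i
  have hline : HasFDerivAt (fun y : ι → ℝ => a + b • y) (b • ContinuousLinearMap.id ℝ (ι → ℝ)) x :=
    ((hasFDerivAt_id x).const_smul b).const_add a
  have hcomp : HasFDerivAt (fun y => f (a + b • y)) _ x := (hf _).hasFDerivAt.comp x hline
  simp [grad, hcomp.fderiv]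

lemma measurable_grad (f : (ι → ℝ) → ℝ) : Measurable (grad f) := by
  cases nonempty_fintype ι
  exact measurable_pi_iff.2 fun i => measurable_fderiv_apply_const ℝ f (Pi.single i 1)

end Finite

variable [Fintype ι]

lemma fderiv_apply_eq_grad_dotProduct (f : (ι → ℝ) → ℝ) (x y : ι → ℝ) :
    fderiv ℝ f x y = grad f x ⬝ᵥ y := by
  conv_lhs => rw [pi_eq_sum_univ' y, map_sum]
  simp only [map_smul, smul_eq_mul, dotProduct, grad, mul_comm]

lemma hasDerivAt_comp_grad {f : (ι → ℝ) → ℝ} (hf : Differentiable ℝ f) {c : ℝ → ι → ℝ}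
    {c' : ι → ℝ} {t : ℝ} (hc : HasDerivAt c c' t) :
    HasDerivAt (fun s => f (c s)) (grad f (c t) ⬝ᵥ c') t := by
  rw [← fderiv_apply_eq_grad_dotProduct]
  exact (hf (c t)).hasFDerivAt.comp_hasDerivAt t hc

lemma abs_grad_dotProduct_le_of_lipschitzWith {f : (ι → ℝ) → ℝ} {C : ℝ≥0} (hf : LipschitzWith C f)
    (x y : ι → ℝ) : |grad f x ⬝ᵥ y| ≤ C * ‖y‖ := by
  rw [← fderiv_apply_eq_grad_dotProduct]
  exact (fderiv ℝ f x).le_of_opNorm_le (norm_fderiv_le_of_lipschitz ℝ hf) y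

lemma abs_grad_le_of_lipschitzWith {f : (ι → ℝ) → ℝ} {C : ℝ≥0} (hf : LipschitzWith C f)
    (x : ι → ℝ) (i : ι) : |grad f x i| ≤ C := by
  simpa [Pi.norm_single] using abs_grad_dotProduct_le_of_lipschitzWith hf x (Pi.single i 1)

lemma memLp_grad_of_lipschitzWith {f : (ι → ℝ) → ℝ} {C : ℝ≥0} (hf : LipschitzWith C f)
    {α : Type*} [MeasurableSpace α] (μ : Measure α) [IsFiniteMeasure μ] {φ : α → ι → ℝ}
    (hφ : Measurable φ) (p : ℝ≥0∞) (i : ι) : MemLp (fun x => grad f (φ x) i) p μ :=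
  .of_bound ((measurable_pi_apply i).comp ((measurable_grad f).comp hφ)).aestronglyMeasurable C
    (ae_of_all _ fun x => abs_grad_le_of_lipschitzWith hf (φ x) i)

end Gradient

section GaussianPoincare

variable {ι : Type*} [Fintype ι]

variable (ι) in
/-- The standard Gaussian measure on `ι → ℝ`: the law of i.i.d. standard normal variables. -/
noncomputable abbrev stdGaussianPi : Measure (ι → ℝ) :=
  Measure.pi fun _ => gaussianReal 0 1

instance isGaussian_pi_gaussianReal (m : ι → ℝ) (v : ι → ℝ≥0) :
    IsGaussian (Measure.pi fun i => gaussianReal (m i) (v i)) := by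
  have heval (i : ι) : HasGaussianLaw (fun x : ι → ℝ => x i)
      (Measure.pi fun i => gaussianReal (m i) (v i)) :=
    ⟨by
      change IsGaussian ((Measure.pi fun i => gaussianReal (m i) (v i)).map (Function.eval i))
      rw [(measurePreserving_eval (fun i => gaussianReal (m i) (v i)) i).map_eq]
      infer_instance⟩
  have hindep : iIndepFun (fun i (x : ι → ℝ) => x i)
      (Measure.pi fun i => gaussianReal (m i) (v i)) :=
    iIndepFun_pi (X := fun _ => id) fun _ => aemeasurable_id
  simpa using (iIndepFun.hasGaussianLaw heval hindep).isGaussian_map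

lemma integral_id_stdGaussianPi : ∫ x, x ∂stdGaussianPi ι = 0 := by
  funext i
  rw [eval_integral (Integrable.eval IsGaussian.integrable_id) i, integral_eval,
    integral_id_gaussianReal, Pi.zero_apply]

lemma measurePreserving_rotation_stdGaussianPi (θ : ℝ) :
    MeasurePreserving (ContinuousLinearMap.rotation θ)
      ((stdGaussianPi ι).prod (stdGaussianPi ι)) ((stdGaussianPi ι).prod (stdGaussianPi ι)) :=
  ⟨by fun_prop, IsGaussian.map_rotation_eq_self integral_id_stdGaussianPi θ⟩

lemma measurePreserving_cos_add_sin_stdGaussianPi (θ : ℝ) :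
    MeasurePreserving (fun z : (ι → ℝ) × (ι → ℝ) => Real.cos θ • z.1 + Real.sin θ • z.2)
      ((stdGaussianPi ι).prod (stdGaussianPi ι)) (stdGaussianPi ι) :=
  measurePreserving_fst.comp (measurePreserving_rotation_stdGaussianPi θ)

lemma measurePreserving_cos_sub_sin_stdGaussianPi (θ : ℝ) :
    MeasurePreserving (fun z : (ι → ℝ) × (ι → ℝ) => Real.cos θ • z.1 + -Real.sin θ • z.2)
      ((stdGaussianPi ι).prod (stdGaussianPi ι)) (stdGaussianPi ι) := by
  simpa using measurePreserving_cos_add_sin_stdGaussianPi (ι := ι) (-θ)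

lemma memLp_of_lipschitzWith {E : Type*} [NormedAddCommGroup E] [MeasurableSpace E]
    {μ : Measure E} [IsFiniteMeasure μ] {p : ℝ≥0∞} (hμ : MemLp id p μ) {f : E → ℝ} {C : ℝ≥0}
    (hf : LipschitzWith C f) : MemLp f p μ := by
  have hcentred : LipschitzWith C fun x => f x - f 0 := by
    simpa using hf.sub (LipschitzWith.const (f 0))
  simpa [Pi.add_def] using (hcentred.comp_memLp (by simp) hμ).add (memLp_const (f 0))

lemma integrable_eval_mul_stdGaussianPi {f : (ι → ℝ) → ℝ} (hf : MemLp f 2 (stdGaussianPi ι))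
    (i : ι) : Integrable (fun x => x i * f x) (stdGaussianPi ι) :=
  (IsGaussian.memLp_two_id.eval i).integrable_mul hf

/-- The correlation `E f(X) f(cos θ X + sin θ Y)` of independent standard Gaussian vectors `X`,
`Y`; it interpolates between `E f(X)²` at `θ = 0` and `(E f(X))²` at `θ = π / 2`. -/
noncomputable def rotationCorrelation (f : (ι → ℝ) → ℝ) (θ : ℝ) : ℝ :=
  ∫ z, f z.1 * f (Real.cos θ • z.1 + Real.sin θ • z.2) ∂(stdGaussianPi ι).prod (stdGaussianPi ι)

lemma rotationCorrelation_zero {f : (ι → ℝ) → ℝ}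
    (hf : AEStronglyMeasurable f (stdGaussianPi ι)) :
    rotationCorrelation f 0 = ∫ x, f x ^ 2 ∂stdGaussianPi ι := by
  simp only [rotationCorrelation, Real.cos_zero, Real.sin_zero, one_smul, zero_smul, add_zero,
    ← sq]
  exact integral_comp_of_measurePreserving measurePreserving_fst (hf.pow 2)

lemma rotationCorrelation_pi_div_two (f : (ι → ℝ) → ℝ) :
    rotationCorrelation f (Real.pi / 2) = (∫ x, f x ∂stdGaussianPi ι) ^ 2 := by
  simp only [rotationCorrelation, Real.cos_pi_div_two, Real.sin_pi_div_two, one_smul, zero_smul,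
    zero_add, integral_prod_mul, sq]

lemma hasDerivAt_cos_smul_add_sin_smul {E : Type*} [NormedAddCommGroup E] [NormedSpace ℝ E]
    (x y : E) (θ : ℝ) :
    HasDerivAt (fun t => Real.cos t • x + Real.sin t • y) (-Real.sin θ • x + Real.cos θ • y) θ :=
  ((Real.hasDerivAt_cos θ).smul_const x).add ((Real.hasDerivAt_sin θ).smul_const y)

lemma measurable_dotProduct {α : Type*} [MeasurableSpace α] {a y : α → ι → ℝ} (ha : Measurable a)
    (hy : Measurable y) : Measurable fun z => a z ⬝ᵥ y z := by
  simp only [dotProduct]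
  fun_prop

variable [DecidableEq ι] {f : (ι → ℝ) → ℝ} {C : ℝ≥0}

theorem integral_mul_stdGaussianPi (hf : Differentiable ℝ f) (hlip : LipschitzWith C f) (i : ι) :
    ∫ x, x i * f x ∂stdGaussianPi ι = ∫ x, grad f x i ∂stdGaussianPi ι := by
  have hf_memLp := memLp_of_lipschitzWith (IsGaussian.memLp_two_id (μ := stdGaussianPi ι)) hlip
  have hderiv (x : ι → ℝ) :
      HasDerivAt (fun t => f (Function.update x i t)) (grad f x i) (x i) := by
    simpa using hasDerivAt_comp_grad hf (hasDerivAt_update x i (x i))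
  simpa using integral_sub_mean_mul_pi_gaussianReal (m := 0) (v := 1) i hderiv
    (hf_memLp.integrable one_le_two)
    (by simpa using integrable_eval_mul_stdGaussianPi hf_memLp i)
    ((memLp_grad_of_lipschitzWith hlip _ measurable_id 1 i).integrable le_rfl)

theorem integral_dotProduct_mul_stdGaussianPi (hf : Differentiable ℝ f) (hlip : LipschitzWith C f)
    (a : ι → ℝ) :
    ∫ x, (a ⬝ᵥ x) * f x ∂stdGaussianPi ι = ∫ x, a ⬝ᵥ grad f x ∂stdGaussianPi ι := by
  have hf_memLp := memLp_of_lipschitzWith (IsGaussian.memLp_two_id (μ := stdGaussianPi ι)) hlip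
  have hgrad_int (i : ι) : Integrable (fun x => grad f x i) (stdGaussianPi ι) :=
    (memLp_grad_of_lipschitzWith hlip _ measurable_id 1 i).integrable le_rfl
  simp only [dotProduct, Finset.sum_mul, mul_assoc]
  rw [integral_finsetSum _ fun i _ =>
      (integrable_eval_mul_stdGaussianPi hf_memLp i).const_mul (a i),
    integral_finsetSum _ fun i _ => (hgrad_int i).const_mul (a i)]
  simp only [integral_const_mul]
  exact Finset.sum_congr rfl fun i _ => by rw [← integral_mul_stdGaussianPi hf hlip i]

lemma hasDerivAt_rotationCorrelation_rotated (hf : Differentiable ℝ f) (hlip : LipschitzWith C f)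
    (θ : ℝ) :
    HasDerivAt (rotationCorrelation f)
      (∫ z, f z.1 * (grad f (Real.cos θ • z.1 + Real.sin θ • z.2) ⬝ᵥ
        (-Real.sin θ • z.1 + Real.cos θ • z.2)) ∂(stdGaussianPi ι).prod (stdGaussianPi ι)) θ := by
  set μ := (stdGaussianPi ι).prod (stdGaussianPi ι)
  have hf_memLp := memLp_of_lipschitzWith (IsGaussian.memLp_two_id (μ := stdGaussianPi ι)) hlip
  have hf_fst : MemLp (fun z : (ι → ℝ) × (ι → ℝ) => f z.1) 2 μ :=
    hf_memLp.comp_measurePreserving measurePreserving_fst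
  have hf_rotated (t : ℝ) :
      MemLp (fun z : (ι → ℝ) × (ι → ℝ) => f (Real.cos t • z.1 + Real.sin t • z.2)) 2 μ :=
    hf_memLp.comp_measurePreserving (measurePreserving_cos_add_sin_stdGaussianPi t)
  have hnorm : MemLp (fun z : (ι → ℝ) × (ι → ℝ) => C * (‖z.1‖ + ‖z.2‖)) 2 μ :=
    ((IsGaussian.memLp_two_id.comp_measurePreserving measurePreserving_fst).norm.add
      (IsGaussian.memLp_two_id.comp_measurePreserving measurePreserving_snd).norm).const_mul _
  refine (hasDerivAt_integral_of_dominated_loc_of_deriv_le (μ := μ) (s := Set.univ)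
    (F := fun t z => f z.1 * f (Real.cos t • z.1 + Real.sin t • z.2))
    (F' := fun t z => f z.1 * (grad f (Real.cos t • z.1 + Real.sin t • z.2) ⬝ᵥ
      (-Real.sin t • z.1 + Real.cos t • z.2)))
    (bound := fun z => |f z.1| * (C * (‖z.1‖ + ‖z.2‖)))
    Filter.univ_mem (Eventually.of_forall fun t => (hf_fst.1.mul (hf_rotated t).1))
    (hf_fst.integrable_mul (hf_rotated θ)) ?_ (ae_of_all _ fun z t _ => ?_)
    (hf_fst.abs.integrable_mul hnorm) (ae_of_all _ fun z t _ => ?_)).2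
  · exact hf_fst.1.mul (measurable_dotProduct ((measurable_grad f).comp (by fun_prop))
      (by fun_prop)).aestronglyMeasurable
  · rw [Real.norm_eq_abs, abs_mul]
    gcongr
    refine (abs_grad_dotProduct_le_of_lipschitzWith hlip _ _).trans ?_
    gcongr
    refine (norm_add_le _ _).trans ?_
    rw [norm_smul, norm_smul, norm_neg]
    exact add_le_add (mul_le_of_le_one_left (norm_nonneg _) (Real.abs_sin_le_one t))
      (mul_le_of_le_one_left (norm_nonneg _) (Real.abs_cos_le_one t))
  · exact (hasDerivAt_comp_grad hf (hasDerivAt_cos_smul_add_sin_smul z.1 z.2 t)).const_mul (f z.1)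

lemma integrable_grad_dotProduct_grad (hlip : LipschitzWith C f) {α : Type*} [MeasurableSpace α]
    (μ : Measure α) [IsFiniteMeasure μ] {φ ψ : α → ι → ℝ} (hφ : Measurable φ) (hψ : Measurable ψ) :
    Integrable (fun z => grad f (φ z) ⬝ᵥ grad f (ψ z)) μ :=
  integrable_finsetSum _ fun i _ => (memLp_grad_of_lipschitzWith hlip μ hφ 2 i).integrable_mul
    (memLp_grad_of_lipschitzWith hlip μ hψ 2 i)

lemma memLp_grad_dotProduct (hlip : LipschitzWith C f) :
    MemLp (fun z : (ι → ℝ) × (ι → ℝ) => grad f z.1 ⬝ᵥ z.2) 2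
      ((stdGaussianPi ι).prod (stdGaussianPi ι)) :=
  .of_le_mul (c := C) (IsGaussian.memLp_two_id.comp_measurePreserving measurePreserving_snd)
    (measurable_dotProduct ((measurable_grad f).comp measurable_fst)
      measurable_snd).aestronglyMeasurable
    (ae_of_all _ fun z => abs_grad_dotProduct_le_of_lipschitzWith hlip z.1 z.2)

lemma integral_mul_grad_dotProduct_rotated (hf : Differentiable ℝ f) (θ : ℝ) :
    ∫ z, f z.1 * (grad f (Real.cos θ • z.1 + Real.sin θ • z.2) ⬝ᵥ
        (-Real.sin θ • z.1 + Real.cos θ • z.2)) ∂(stdGaussianPi ι).prod (stdGaussianPi ι)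
      = ∫ z, (grad f z.1 ⬝ᵥ z.2) * f (Real.cos θ • z.1 + -Real.sin θ • z.2)
        ∂(stdGaussianPi ι).prod (stdGaussianPi ι) := by
  have hmeas : Measurable fun z : (ι → ℝ) × (ι → ℝ) =>
      (grad f z.1 ⬝ᵥ z.2) * f (Real.cos θ • z.1 + -Real.sin θ • z.2) :=
    (measurable_dotProduct ((measurable_grad f).comp measurable_fst) measurable_snd).mul
      (hf.continuous.measurable.comp (by fun_prop))
  rw [← integral_comp_of_measurePreserving (measurePreserving_rotation_stdGaussianPi θ)
    hmeas.aestronglyMeasurable]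
  refine integral_congr_ae (ae_of_all _ fun z => ?_)
  have hback : Real.cos θ • (Real.cos θ • z.1 + Real.sin θ • z.2)
      + -Real.sin θ • (-Real.sin θ • z.1 + Real.cos θ • z.2) = z.1 := by
    linear_combination (norm := module) (Real.cos_sq_add_sin_sq θ) • z.1
  simp only [ContinuousLinearMap.rotation_apply, hback, mul_comm]

lemma hasDerivAt_rotationCorrelation (hf : Differentiable ℝ f) (hlip : LipschitzWith C f)
    (θ : ℝ) :
    HasDerivAt (rotationCorrelation f)
      (-Real.sin θ * ∫ z, grad f z.1 ⬝ᵥ grad f (Real.cos θ • z.1 + -Real.sin θ • z.2)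
        ∂(stdGaussianPi ι).prod (stdGaussianPi ι)) θ := by
  have hint : Integrable
      (fun z => (grad f z.1 ⬝ᵥ z.2) * f (Real.cos θ • z.1 + -Real.sin θ • z.2))
      ((stdGaussianPi ι).prod (stdGaussianPi ι)) :=
    (memLp_grad_dotProduct hlip).integrable_mul <|
      (memLp_of_lipschitzWith IsGaussian.memLp_two_id hlip).comp_measurePreserving
        (measurePreserving_cos_sub_sin_stdGaussianPi θ)
  have hstein (x : ι → ℝ) :
      ∫ y, (grad f x ⬝ᵥ y) * f (Real.cos θ • x + -Real.sin θ • y) ∂stdGaussianPi ι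
        = -Real.sin θ * ∫ y, grad f x ⬝ᵥ grad f (Real.cos θ • x + -Real.sin θ • y)
          ∂stdGaussianPi ι := by
    have hlip_line : LipschitzWith (C * (0 + ‖-Real.sin θ‖₊))
        fun y => f (Real.cos θ • x + -Real.sin θ • y) :=
      hlip.comp ((LipschitzWith.const _).add (lipschitzWith_smul _))
    rw [integral_dotProduct_mul_stdGaussianPi (by fun_prop) hlip_line]
    simp only [grad_comp_add_smul hf, dotProduct_smul, smul_eq_mul, integral_const_mul]
  convert hasDerivAt_rotationCorrelation_rotated hf hlip θ using 1
  rw [integral_mul_grad_dotProduct_rotated hf θ, integral_prod _ hint,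
    integral_prod _ (integrable_grad_dotProduct_grad hlip _ measurable_fst (by fun_prop)),
    ← integral_const_mul]
  exact integral_congr_ae (ae_of_all _ fun x => (hstein x).symm)

lemma integral_grad_dotProduct_grad_le (hlip : LipschitzWith C f) {α : Type*} [MeasurableSpace α]
    {μ : Measure α} [IsFiniteMeasure μ] {ν : Measure (ι → ℝ)} {φ ψ : α → ι → ℝ}
    (hφ : MeasurePreserving φ μ ν) (hψ : MeasurePreserving ψ μ ν) :
    ∫ z, grad f (φ z) ⬝ᵥ grad f (ψ z) ∂μ ≤ ∫ x, grad f x ⬝ᵥ grad f x ∂ν := by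
  have hint {φ ψ : α → ι → ℝ} (hφ : Measurable φ) (hψ : Measurable ψ) :=
    integrable_grad_dotProduct_grad hlip μ hφ hψ
  have hlaw {φ : α → ι → ℝ} (hφ : MeasurePreserving φ μ ν) :
      ∫ z, grad f (φ z) ⬝ᵥ grad f (φ z) ∂μ = ∫ x, grad f x ⬝ᵥ grad f x ∂ν :=
    integral_comp_of_measurePreserving hφ
      (measurable_dotProduct (measurable_grad f) (measurable_grad f)).aestronglyMeasurable
  calc ∫ z, grad f (φ z) ⬝ᵥ grad f (ψ z) ∂μ
      ≤ ∫ z, 2⁻¹ * (grad f (φ z) ⬝ᵥ grad f (φ z) + grad f (ψ z) ⬝ᵥ grad f (ψ z)) ∂μ := by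
        refine integral_mono (hint hφ.measurable hψ.measurable)
          (((hint hφ.measurable hφ.measurable).add (hint hψ.measurable hψ.measurable)).const_mul _)
          fun z => ?_
        simp only [dotProduct, ← Finset.sum_add_distrib, Finset.mul_sum]
        exact Finset.sum_le_sum fun i _ => by
          linarith [two_mul_le_add_sq (grad f (φ z) i) (grad f (ψ z) i)]
    _ = ∫ x, grad f x ⬝ᵥ grad f x ∂ν := by
        rw [integral_const_mul, integral_add (hint hφ.measurable hφ.measurable)
          (hint hψ.measurable hψ.measurable), hlaw hφ, hlaw hψ]
        ring

theorem variance_stdGaussianPi_le (hf : Differentiable ℝ f) (hlip : LipschitzWith C f) :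
    Var[f; stdGaussianPi ι] ≤ ∫ x, grad f x ⬝ᵥ grad f x ∂stdGaussianPi ι := by
  set G := ∫ x, grad f x ⬝ᵥ grad f x ∂stdGaussianPi ι
  have hderiv (θ : ℝ) : HasDerivAt (fun θ => rotationCorrelation f θ - Real.cos θ * G) _ θ :=
    (hasDerivAt_rotationCorrelation hf hlip θ).sub ((Real.hasDerivAt_cos θ).mul_const G)
  have hmono : MonotoneOn (fun θ => rotationCorrelation f θ - Real.cos θ * G)
      (Set.Icc 0 (Real.pi / 2)) := by
    refine monotoneOn_of_deriv_nonneg (convex_Icc _ _)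
      (fun θ _ => (hderiv θ).continuousAt.continuousWithinAt)
      (fun θ _ => (hderiv θ).differentiableAt.differentiableWithinAt) fun θ hθ => ?_
    rw [interior_Icc] at hθ
    have hsin : 0 ≤ Real.sin θ := Real.sin_nonneg_of_nonneg_of_le_pi hθ.1.le
      (by linarith [hθ.2, Real.pi_pos])
    have hgrad := integral_grad_dotProduct_grad_le hlip
      (measurePreserving_fst (μ := stdGaussianPi ι) (ν := stdGaussianPi ι))
      (measurePreserving_cos_sub_sin_stdGaussianPi θ)
    rw [(hderiv θ).deriv]
    nlinarith [mul_le_mul_of_nonneg_left hgrad hsin]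
  have hends := hmono (Set.left_mem_Icc.2 (by positivity)) (Set.right_mem_Icc.2 (by positivity))
    (by positivity)
  have hf_memLp := memLp_of_lipschitzWith (IsGaussian.memLp_two_id (μ := stdGaussianPi ι)) hlip
  simp only [rotationCorrelation_zero hf_memLp.1, rotationCorrelation_pi_div_two, Real.cos_zero,
    Real.cos_pi_div_two] at hends
  rw [variance_eq_sub hf_memLp]
  simp only [Pi.pow_apply]
  linarith

end GaussianPoincare

section GibbsMeasure

variable {S : Type*} [Fintype S]

/-- The log-partition function `log ∑ exp (h s)` of the energies `h`. -/
noncomputable def logPartition (h : S → ℝ) : ℝ :=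
  Real.log (∑ s, Real.exp (h s))

/-- The Gibbs probability of the state `s` for the energies `h`, favouring large energies. -/
noncomputable def gibbsWeight (h : S → ℝ) (s : S) : ℝ :=
  Real.exp (h s) / ∑ t, Real.exp (h t)

/-- The Gibbs average of an observable, as a continuous linear functional. -/
noncomputable def gibbsAvg (h : S → ℝ) : (S → ℝ) →L[ℝ] ℝ :=
  ∑ s, gibbsWeight h s • ContinuousLinearMap.proj s

/-- The Gibbs average of a function of two independent replicas. -/
noncomputable def replicaAvg (h : S → ℝ) (c : S → S → ℝ) : ℝ :=
  gibbsAvg h fun s => gibbsAvg h (c s)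

/-- The covariance of two observables under the Gibbs measure, linear in the second one. -/
noncomputable def gibbsCov (h w : S → ℝ) : (S → ℝ) →L[ℝ] ℝ :=
  (gibbsAvg h).comp (ContinuousLinearMap.mul ℝ (S → ℝ) w) - gibbsAvg h w • gibbsAvg h

lemma gibbsAvg_apply (h w : S → ℝ) : gibbsAvg h w = ∑ s, gibbsWeight h s * w s := by
  simp [gibbsAvg]

lemma gibbsCov_apply (h w y : S → ℝ) :
    gibbsCov h w y = gibbsAvg h (w * y) - gibbsAvg h w * gibbsAvg h y := rfl

lemma replicaAvg_apply (h : S → ℝ) (c : S → S → ℝ) :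
    replicaAvg h c = ∑ s, ∑ t, gibbsWeight h s * gibbsWeight h t * c s t := by
  simp only [replicaAvg, gibbsAvg_apply, Finset.mul_sum, mul_assoc]

lemma replicaAvg_eq_div (h : S → ℝ) (c : S → S → ℝ) :
    replicaAvg h c = (∑ s, ∑ t, Real.exp (h s) * Real.exp (h t) * c s t)
      / (∑ s, Real.exp (h s)) ^ 2 := by
  simp only [replicaAvg_apply, gibbsWeight, Finset.sum_div]
  exact Finset.sum_congr rfl fun s _ => Finset.sum_congr rfl fun t _ => by ring

lemma replicaAvg_const_mul (h : S → ℝ) (a : ℝ) (c : S → S → ℝ) :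
    replicaAvg h (fun s t => a * c s t) = a * replicaAvg h c := by
  simp only [replicaAvg_apply, Finset.mul_sum, mul_left_comm a]

lemma gibbsWeight_nonneg (h : S → ℝ) (s : S) : 0 ≤ gibbsWeight h s := by
  rw [gibbsWeight]
  positivity

lemma gibbsAvg_mono (h : S → ℝ) : Monotone (gibbsAvg h) := fun w w' hw => by
  simp only [gibbsAvg_apply]
  exact Finset.sum_le_sum fun s _ => mul_le_mul_of_nonneg_left (hw s) (gibbsWeight_nonneg h s)

lemma replicaAvg_mono (h : S → ℝ) : Monotone (replicaAvg h) := fun _ _ hc =>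
  gibbsAvg_mono h fun s => gibbsAvg_mono h (hc s)

lemma replicaAvg_dotProduct {ι : Type*} [Fintype ι] (h : S → ℝ) (A : Matrix S ι ℝ) :
    replicaAvg h (fun s t => A s ⬝ᵥ A t) = ∑ i, gibbsAvg h (A.col i) ^ 2 := by
  have hmarginal (s : S) :
      gibbsAvg h (fun t => A s ⬝ᵥ A t) = ∑ i, A s i * gibbsAvg h (A.col i) := by
    have : (fun t => A s ⬝ᵥ A t) = ∑ i, A s i • A.col i := by
      funext t
      simp [dotProduct]
    simp [this]
  have : (fun s => ∑ i, A s i * gibbsAvg h (A.col i)) = ∑ i, gibbsAvg h (A.col i) • A.col i := by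
    funext s
    simp [mul_comm]
  simp only [replicaAvg, hmarginal, this, map_sum, map_smul, smul_eq_mul, sq]

lemma gibbsAvg_mulVec {ι : Type*} [Fintype ι] (h : S → ℝ) (A : Matrix S ι ℝ) (g : ι → ℝ) :
    gibbsAvg h (A *ᵥ g) = ∑ i, g i * gibbsAvg h (A.col i) := by
  have : A *ᵥ g = ∑ i, g i • A.col i := by
    funext s
    simp [Matrix.mulVec, dotProduct, mul_comm]
  simp [this]

lemma sum_gibbsCov_col {ι : Type*} [Fintype ι] (h : S → ℝ) (A : Matrix S ι ℝ) :
    ∑ i, gibbsCov h (A.col i) (A.col i)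
      = gibbsAvg h (fun s => A s ⬝ᵥ A s) - replicaAvg h fun s t => A s ⬝ᵥ A t := by
  have : (fun s => A s ⬝ᵥ A s) = ∑ i, A.col i * A.col i := by
    funext s
    simp [dotProduct]
  simp only [gibbsCov_apply, Finset.sum_sub_distrib, replicaAvg_dotProduct, this, map_sum, sq]

variable [Nonempty S]

lemma sum_exp_pos (h : S → ℝ) : 0 < ∑ s, Real.exp (h s) :=
  Finset.sum_pos (fun _ _ => Real.exp_pos _) Finset.univ_nonempty

lemma sum_gibbsWeight (h : S → ℝ) : ∑ s, gibbsWeight h s = 1 := by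
  simp only [gibbsWeight, ← Finset.sum_div]
  exact div_self (sum_exp_pos h).ne'

lemma gibbsAvg_const (h : S → ℝ) (c : ℝ) : gibbsAvg h (fun _ => c) = c := by
  rw [gibbsAvg_apply, ← Finset.sum_mul, sum_gibbsWeight, one_mul]

lemma norm_gibbsAvg_apply_le (h w : S → ℝ) : ‖gibbsAvg h w‖ ≤ ‖w‖ := by
  have hw (s : S) : |w s| ≤ ‖w‖ := norm_le_pi_norm w s
  rw [Real.norm_eq_abs, abs_le]
  constructor
  · simpa [gibbsAvg_const] using gibbsAvg_mono h (a := fun _ => -‖w‖) fun s => (abs_le.1 (hw s)).1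
  · simpa [gibbsAvg_const] using gibbsAvg_mono h (b := fun _ => ‖w‖) fun s => (abs_le.1 (hw s)).2

lemma norm_gibbsAvg_le (h : S → ℝ) : ‖gibbsAvg h‖ ≤ 1 :=
  ContinuousLinearMap.opNorm_le_bound _ zero_le_one fun w => by
    simpa using norm_gibbsAvg_apply_le h w

lemma norm_replicaAvg_le (h : S → ℝ) (c : S → S → ℝ) : ‖replicaAvg h c‖ ≤ ‖c‖ :=
  (norm_gibbsAvg_apply_le h _).trans <| (pi_norm_le_iff_of_nonneg (norm_nonneg c)).2 fun s =>
    (norm_gibbsAvg_apply_le h (c s)).trans (norm_le_pi_norm c s)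

lemma norm_gibbsCov_le (h w : S → ℝ) : ‖gibbsCov h w‖ ≤ 2 * ‖w‖ := by
  refine ContinuousLinearMap.opNorm_le_bound _ (by positivity) fun y => ?_
  have hmul : ‖gibbsAvg h (w * y)‖ ≤ ‖w‖ * ‖y‖ :=
    (norm_gibbsAvg_apply_le h _).trans (norm_mul_le w y)
  have hprod : ‖gibbsAvg h w * gibbsAvg h y‖ ≤ ‖w‖ * ‖y‖ := by
    rw [norm_mul]
    gcongr <;> exact norm_gibbsAvg_apply_le h _
  rw [gibbsCov_apply]
  linarith [norm_sub_le (gibbsAvg h (w * y)) (gibbsAvg h w * gibbsAvg h y)]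

lemma hasFDerivAt_logPartition (h : S → ℝ) : HasFDerivAt logPartition (gibbsAvg h) h := by
  have hsum : HasFDerivAt (fun k : S → ℝ => ∑ s, Real.exp (k s))
      (∑ s, Real.exp (h s) • ContinuousLinearMap.proj (R := ℝ) (φ := fun _ : S => ℝ) s) h :=
    HasFDerivAt.fun_sum fun s _ => (hasFDerivAt_apply s h).exp
  refine (hsum.log (sum_exp_pos h).ne').congr_fderiv ?_
  simp only [gibbsAvg, gibbsWeight, Finset.smul_sum, smul_smul, div_eq_inv_mul]

lemma differentiable_logPartition : Differentiable ℝ (logPartition : (S → ℝ) → ℝ) := fun h =>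
  (hasFDerivAt_logPartition h).differentiableAt

lemma lipschitzWith_logPartition : LipschitzWith 1 (logPartition : (S → ℝ) → ℝ) :=
  lipschitzWith_of_nnnorm_fderiv_le (𝕜 := ℝ) differentiable_logPartition fun h => by
    rw [(hasFDerivAt_logPartition h).fderiv]
    exact norm_gibbsAvg_le h

lemma gibbsWeight_eq_exp_sub_logPartition (h : S → ℝ) (s : S) :
    gibbsWeight h s = Real.exp (h s - logPartition h) := by
  rw [Real.exp_sub, logPartition, Real.exp_log (sum_exp_pos h), gibbsWeight]

lemma hasFDerivAt_gibbsWeight (h : S → ℝ) (s : S) :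
    HasFDerivAt (fun k => gibbsWeight k s)
      (gibbsWeight h s • (ContinuousLinearMap.proj s - gibbsAvg h)) h := by
  simp only [gibbsWeight_eq_exp_sub_logPartition]
  exact ((hasFDerivAt_apply s h).sub (hasFDerivAt_logPartition h)).exp

lemma hasFDerivAt_gibbsAvg_apply (h w : S → ℝ) :
    HasFDerivAt (fun k => gibbsAvg k w) (gibbsCov h w) h := by
  simp only [gibbsAvg_apply]
  refine (HasFDerivAt.fun_sum fun s _ =>
    (hasFDerivAt_gibbsWeight h s).mul_const (w s)).congr_fderiv ?_
  ext1 y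
  simp only [gibbsCov_apply, gibbsAvg_apply h (w * y), gibbsAvg_apply h w, Finset.sum_mul,
    ← Finset.sum_sub_distrib, sum_apply, smul_apply,
    sub_apply, ContinuousLinearMap.proj_apply, smul_eq_mul, Pi.mul_apply]
  exact Finset.sum_congr rfl fun s _ => by ring

lemma differentiable_gibbsAvg_apply (w : S → ℝ) : Differentiable ℝ fun h => gibbsAvg h w :=
  fun h => (hasFDerivAt_gibbsAvg_apply h w).differentiableAt

lemma lipschitzWith_gibbsAvg_apply (w : S → ℝ) :
    LipschitzWith (2 * ‖w‖₊) (fun h => gibbsAvg h w) :=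
  lipschitzWith_of_nnnorm_fderiv_le (𝕜 := ℝ) (differentiable_gibbsAvg_apply w) fun h => by
    rw [(hasFDerivAt_gibbsAvg_apply h w).fderiv]
    exact norm_gibbsCov_le h w

lemma continuous_replicaAvg (c : S → S → ℝ) : Continuous fun h => replicaAvg h c := by
  have hweight (s : S) : Continuous fun h : S → ℝ => gibbsWeight h s :=
    continuous_iff_continuousAt.2 fun h => (hasFDerivAt_gibbsWeight h s).continuousAt
  simp only [replicaAvg_apply]
  fun_prop

end GibbsMeasure

section GaussianEnergies

variable {S ι : Type*} [Fintype ι]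

lemma grad_comp_mulVec [Finite S] [DecidableEq ι] {φ : (S → ℝ) → ℝ} {φ' : (S → ℝ) →L[ℝ] ℝ}
    {A : Matrix S ι ℝ} {g : ι → ℝ} (hφ : HasFDerivAt φ φ' (A *ᵥ g)) (i : ι) :
    grad (fun x => φ (A *ᵥ x)) g i = φ' (A.col i) := by
  cases nonempty_fintype S
  have hcomp : HasFDerivAt (fun x => φ (A *ᵥ x)) _ g :=
    hφ.comp g A.mulVecLin.toContinuousLinearMap.hasFDerivAt
  simp [grad, hcomp.fderiv]

lemma differentiable_comp_mulVec [Finite S] {φ : (S → ℝ) → ℝ} (hφ : Differentiable ℝ φ)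
    (A : Matrix S ι ℝ) : Differentiable ℝ fun g => φ (A *ᵥ g) := by
  cases nonempty_fintype S
  exact hφ.comp A.mulVecLin.toContinuousLinearMap.differentiable

variable [Fintype S]

lemma lipschitzWith_comp_mulVec {φ : (S → ℝ) → ℝ} {C : ℝ≥0} (hφ : LipschitzWith C φ)
    (A : Matrix S ι ℝ) :
    LipschitzWith (C * ‖A.mulVecLin.toContinuousLinearMap‖₊) fun g => φ (A *ᵥ g) :=
  hφ.comp A.mulVecLin.toContinuousLinearMap.lipschitz

lemma continuous_replicaAvg_mulVec [Nonempty S] (A : Matrix S ι ℝ) (c : S → S → ℝ) :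
    Continuous fun g => replicaAvg (A *ᵥ g) c :=
  (continuous_replicaAvg c).comp (by fun_prop)

lemma integrable_replicaAvg_mulVec [Nonempty S] {μ : Measure (ι → ℝ)} [IsFiniteMeasure μ]
    (A : Matrix S ι ℝ) (c : S → S → ℝ) : Integrable (fun g => replicaAvg (A *ᵥ g) c) μ :=
  .of_bound (continuous_replicaAvg_mulVec A c).aestronglyMeasurable ‖c‖
    (ae_of_all _ fun _ => norm_replicaAvg_le _ c)

lemma continuous_integral_replicaAvg_smul_mulVec [Nonempty S] {μ : Measure (ι → ℝ)}
    [IsFiniteMeasure μ] (A : Matrix S ι ℝ) (c : S → S → ℝ) :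
    Continuous fun β : ℝ => ∫ g, replicaAvg ((β • A) *ᵥ g) c ∂μ :=
  continuous_of_dominated
    (fun β => (continuous_replicaAvg_mulVec (β • A) c).aestronglyMeasurable)
    (fun _ => ae_of_all _ fun _ => norm_replicaAvg_le _ c) (integrable_const _)
    (ae_of_all _ fun g => (continuous_replicaAvg c).comp (by fun_prop))

variable [Nonempty S]

lemma memLp_logPartition_mulVec (A : Matrix S ι ℝ) :
    MemLp (fun g => logPartition (A *ᵥ g)) 2 (stdGaussianPi ι) :=
  memLp_of_lipschitzWith IsGaussian.memLp_two_id
    (lipschitzWith_comp_mulVec lipschitzWith_logPartition A)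

theorem variance_logPartition_mulVec_le (A : Matrix S ι ℝ) :
    Var[fun g => logPartition (A *ᵥ g); stdGaussianPi ι]
      ≤ ∫ g, replicaAvg (A *ᵥ g) (fun s t => A s ⬝ᵥ A t) ∂stdGaussianPi ι := by
  classical
  refine (variance_stdGaussianPi_le (differentiable_comp_mulVec differentiable_logPartition A)
    (lipschitzWith_comp_mulVec lipschitzWith_logPartition A)).trans_eq ?_
  refine integral_congr_ae (ae_of_all _ fun g => ?_)
  simp only [dotProduct, grad_comp_mulVec (hasFDerivAt_logPartition _), ← sq]
  exact (replicaAvg_dotProduct _ A).symm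

theorem integral_mul_gibbsAvg_smul_mulVec (A : Matrix S ι ℝ) (β : ℝ) (w : S → ℝ) (i : ι) :
    ∫ g, g i * gibbsAvg ((β • A) *ᵥ g) w ∂stdGaussianPi ι
      = β * ∫ g, gibbsCov ((β • A) *ᵥ g) w (A.col i) ∂stdGaussianPi ι := by
  classical
  rw [integral_mul_stdGaussianPi
    (differentiable_comp_mulVec (differentiable_gibbsAvg_apply w) (β • A))
    (lipschitzWith_comp_mulVec (lipschitzWith_gibbsAvg_apply w) _) i, ← integral_const_mul]
  refine integral_congr_ae (ae_of_all _ fun g => ?_)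
  simp only [grad_comp_mulVec (hasFDerivAt_gibbsAvg_apply _ w)]
  exact map_smul (gibbsCov ((β • A) *ᵥ g) w) β (A.col i)

lemma integrable_gibbsCov_mulVec {μ : Measure (ι → ℝ)} [IsFiniteMeasure μ] (A : Matrix S ι ℝ)
    (w y : S → ℝ) : Integrable (fun g => gibbsCov (A *ᵥ g) w y) μ := by
  have hcont (u : S → ℝ) : Continuous fun g => gibbsAvg (A *ᵥ g) u :=
    (differentiable_comp_mulVec (differentiable_gibbsAvg_apply u) A).continuous
  exact .of_bound ((hcont (w * y)).sub ((hcont w).mul (hcont y))).aestronglyMeasurable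
    (2 * ‖w‖ * ‖y‖) (ae_of_all _ fun g => (gibbsCov _ w).le_of_opNorm_le (norm_gibbsCov_le _ w) y)

theorem integral_gibbsAvg_smul_mulVec (A : Matrix S ι ℝ) (β : ℝ) :
    ∫ g, gibbsAvg ((β • A) *ᵥ g) (A *ᵥ g) ∂stdGaussianPi ι
      = β * ∫ g, (gibbsAvg ((β • A) *ᵥ g) (fun s => A s ⬝ᵥ A s)
        - replicaAvg ((β • A) *ᵥ g) (fun s t => A s ⬝ᵥ A t)) ∂stdGaussianPi ι := by
  have hmemLp (i : ι) : MemLp (fun g => gibbsAvg ((β • A) *ᵥ g) (A.col i)) 2 (stdGaussianPi ι) :=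
    memLp_of_lipschitzWith IsGaussian.memLp_two_id
      (lipschitzWith_comp_mulVec (lipschitzWith_gibbsAvg_apply _) _)
  simp only [gibbsAvg_mulVec, ← sum_gibbsCov_col]
  rw [integral_finsetSum _ fun i _ => integrable_eval_mul_stdGaussianPi (hmemLp i) i,
    integral_finsetSum _ fun i _ => integrable_gibbsCov_mulVec _ _ _, Finset.mul_sum]
  exact Finset.sum_congr rfl fun i _ => integral_mul_gibbsAvg_smul_mulVec A β (A.col i) i

lemma hasDerivAt_logPartition_smul_mulVec (A : Matrix S ι ℝ) (g : ι → ℝ) (β : ℝ) :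
    HasDerivAt (fun l : ℝ => logPartition ((l • A) *ᵥ g))
      (gibbsAvg ((β • A) *ᵥ g) (A *ᵥ g)) β := by
  have hline : HasDerivAt (fun l : ℝ => (l • A) *ᵥ g) (A *ᵥ g) β := by
    simp only [Matrix.smul_mulVec]
    simpa only [id, one_smul] using (hasDerivAt_id β).smul_const (A *ᵥ g)
  exact (hasFDerivAt_logPartition _).comp_hasDerivAt β hline

lemma measurable_gibbsAvg_mulVec (A B : Matrix S ι ℝ) :
    Measurable fun g => gibbsAvg (B *ᵥ g) (A *ᵥ g) := by
  simp only [gibbsAvg_mulVec]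
  exact Finset.measurable_fun_sum _ fun i _ => (measurable_pi_apply i).mul
    (differentiable_comp_mulVec (differentiable_gibbsAvg_apply _) B).continuous.measurable

theorem hasDerivAt_integral_logPartition (A : Matrix S ι ℝ) (β : ℝ) :
    HasDerivAt (fun l : ℝ => ∫ g, logPartition ((l • A) *ᵥ g) ∂stdGaussianPi ι)
      (∫ g, gibbsAvg ((β • A) *ᵥ g) (A *ᵥ g) ∂stdGaussianPi ι) β := by
  have hbound : Integrable (fun g => ‖A *ᵥ g‖) (stdGaussianPi ι) :=
    (A.mulVecLin.toContinuousLinearMap.integrable_comp IsGaussian.integrable_id).norm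
  exact (hasDerivAt_integral_of_dominated_loc_of_deriv_le (μ := stdGaussianPi ι) (s := Set.univ)
    (F := fun l g => logPartition ((l • A) *ᵥ g))
    (F' := fun l g => gibbsAvg ((l • A) *ᵥ g) (A *ᵥ g)) (bound := fun g => ‖A *ᵥ g‖)
    Filter.univ_mem
    (Eventually.of_forall fun l => (memLp_logPartition_mulVec (l • A)).1)
    ((memLp_logPartition_mulVec (β • A)).integrable one_le_two)
    (measurable_gibbsAvg_mulVec A (β • A)).aestronglyMeasurable
    (ae_of_all _ fun g l _ => norm_gibbsAvg_apply_le _ _) hbound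
    (ae_of_all _ fun g l _ => hasDerivAt_logPartition_smul_mulVec A g l)).2

theorem integral_logPartition_smul_mulVec {A : Matrix S ι ℝ} {v : ℝ}
    (hv : ∀ s, A s ⬝ᵥ A s = v) (β : ℝ) :
    ∫ g, logPartition ((β • A) *ᵥ g) ∂stdGaussianPi ι
      = Real.log (Fintype.card S) + v * β ^ 2 / 2 - ∫ l in (0)..β,
        l * ∫ g, replicaAvg ((l • A) *ᵥ g) (fun s t => A s ⬝ᵥ A t) ∂stdGaussianPi ι := by
  let q (l : ℝ) : ℝ := ∫ g, replicaAvg ((l • A) *ᵥ g) (fun s t => A s ⬝ᵥ A t) ∂stdGaussianPi ι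
  have hq : Continuous q := continuous_integral_replicaAvg_smul_mulVec A _
  have hderiv (l : ℝ) : HasDerivAt
      (fun l : ℝ => ∫ g, logPartition ((l • A) *ᵥ g) ∂stdGaussianPi ι) (v * l - l * q l) l := by
    convert hasDerivAt_integral_logPartition A l using 1
    simp only [integral_gibbsAvg_smul_mulVec, hv, gibbsAvg_const]
    rw [integral_sub (integrable_const v) (integrable_replicaAvg_mulVec _ _)]
    simp only [integral_const, probReal_univ, one_smul, q]
    ring
  have hzero : ∫ g, logPartition (((0 : ℝ) • A) *ᵥ g) ∂stdGaussianPi ι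
      = Real.log (Fintype.card S) := by
    simp [logPartition]
  have hftc := intervalIntegral.integral_eq_sub_of_hasDerivAt (a := 0) (b := β)
    (fun l _ => hderiv l)
    (Continuous.intervalIntegrable (by fun_prop) _ _)
  rw [intervalIntegral.integral_sub (Continuous.intervalIntegrable (by fun_prop) _ _)
    (Continuous.intervalIntegrable (by fun_prop) _ _), intervalIntegral.integral_const_mul,
    integral_id, hzero] at hftc
  linarith

end GaussianEnergies

theorem measureReal_ge_le_variance_add_sq_div_sq {Ω : Type*} [MeasurableSpace Ω] {μ : Measure Ω}
    [IsProbabilityMeasure μ] {X : Ω → ℝ} (hX : MemLp X 2 μ) (a : ℝ) {r : ℝ} (hr : 0 < r) :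
    μ.real {ω | r ≤ |X ω - a|} ≤ (Var[X; μ] + (∫ ω, X ω ∂μ - a) ^ 2) / r ^ 2 := by
  have hXa : MemLp (fun ω => X ω - a) 2 μ := hX.sub (memLp_const a)
  have hsecond : ∫ ω, (X ω - a) ^ 2 ∂μ = Var[X; μ] + (∫ ω, X ω ∂μ - a) ^ 2 := by
    have hmean : ∫ ω, (X ω - a) ∂μ = ∫ ω, X ω ∂μ - a := by
      rw [integral_sub (hX.integrable one_le_two) (integrable_const a), integral_const,
        probReal_univ, one_smul]
    rw [← variance_sub_const hX.1 a, variance_eq_sub hXa, hmean, sub_add_cancel]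
    rfl
  have hset : {ω | r ≤ |X ω - a|} = {ω | r ^ 2 ≤ (X ω - a) ^ 2} := by
    ext ω
    simp only [Set.mem_ofPred_eq, sq_le_sq, abs_of_pos hr]
  rw [le_div_iff₀ (by positivity), mul_comm, ← hsecond, hset]
  exact mul_meas_ge_le_integral_of_nonneg (ae_of_all _ fun ω => sq_nonneg _) hXa.integrable_sq _

section PureSpinModel

lemma mul_self_rpow_half_sub_one {x : ℝ} (hx : 0 < x) (p : ℕ) :
    x ^ (((p : ℝ) - 1) / 2) * x ^ (((p : ℝ) - 1) / 2) = x ^ p / x := by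
  rw [← Real.rpow_add hx, add_halves, Real.rpow_sub_one hx.ne', Real.rpow_natCast]

lemma overlap_self {N : ℕ} (hN : N ≠ 0) (s : Fin N → Bool) : overlap s s = 1 := by
  have hspin (i : Fin N) : spin s i * spin s i = 1 := by
    unfold spin
    split_ifs <;> norm_num
  simp [overlap, hspin, hN]

lemma sum_prod_spin_mul_prod_spin {N : ℕ} (hN : N ≠ 0) (p : ℕ) (s t : Fin N → Bool) :
    ∑ i : Fin p → Fin N, (∏ j, spin s (i j)) * ∏ j, spin t (i j) = (N * overlap s t) ^ p := by
  rw [overlap, mul_div_cancel₀ _ (Nat.cast_ne_zero.2 hN), Fintype.sum_pow]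
  simp only [Finset.prod_mul_distrib]

/-- The matrix expressing the energies `H_N(σ) / √2`, normalised as in the Boltzmann weights of
`freeEnergy`, as linear functions of the disorder. -/
noncomputable def energyMatrix (N p : ℕ) : Matrix (Fin N → Bool) (Fin p → Fin N) ℝ :=
  Matrix.of fun s i => (∏ j, spin s (i j)) / (√2 * (N : ℝ) ^ (((p : ℝ) - 1) / 2))

lemma smul_energyMatrix_mulVec (N p : ℕ) (β : ℝ) (g : (Fin p → Fin N) → ℝ) (s : Fin N → Bool) :
    ((β • energyMatrix N p) *ᵥ g) s = β / √2 * ham N p g s := by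
  rw [Matrix.smul_mulVec]
  simp only [Pi.smul_apply, smul_eq_mul, Matrix.mulVec, dotProduct, energyMatrix, Matrix.of_apply,
    ham, Finset.mul_sum, Finset.sum_div]
  exact Finset.sum_congr rfl fun i _ => by ring

lemma energyMatrix_dotProduct {N : ℕ} (hN : N ≠ 0) (p : ℕ) (s t : Fin N → Bool) :
    energyMatrix N p s ⬝ᵥ energyMatrix N p t = N / 2 * overlap s t ^ p := by
  have hNpos : (0 : ℝ) < N := by positivity
  simp only [dotProduct, energyMatrix, Matrix.of_apply, div_mul_div_comm, ← Finset.sum_div,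
    sum_prod_spin_mul_prod_spin hN]
  rw [mul_mul_mul_comm, mul_self_rpow_half_sub_one hNpos, Real.mul_self_sqrt zero_le_two, mul_pow]
  field_simp

lemma energyMatrix_dotProduct_self {N : ℕ} (hN : N ≠ 0) (p : ℕ) (s : Fin N → Bool) :
    energyMatrix N p s ⬝ᵥ energyMatrix N p s = N / 2 := by
  rw [energyMatrix_dotProduct hN, overlap_self hN, one_pow, mul_one]

lemma freeEnergy_eq_logPartition (N p : ℕ) (β : ℝ) (g : (Fin p → Fin N) → ℝ) :
    freeEnergy N p β g = (N : ℝ)⁻¹ * (logPartition ((β • energyMatrix N p) *ᵥ g)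
      - Real.log (Fintype.card (Fin N → Bool))) := by
  simp only [freeEnergy, ← smul_energyMatrix_mulVec, ← Finset.mul_sum]
  rw [Real.log_mul (by positivity) (sum_exp_pos _).ne']
  simp only [logPartition, one_div, Real.log_inv, Fintype.card_fun, Fintype.card_bool,
    Fintype.card_fin, Nat.cast_pow, Nat.cast_ofNat, neg_add_eq_sub]

lemma gibbsAvgRp_eq_integral_replicaAvg (N p : ℕ) (β : ℝ) :
    gibbsAvgRp N p β = ∫ g, replicaAvg ((β • energyMatrix N p) *ᵥ g)
      (fun s t => overlap s t ^ p) ∂stdGaussianPi (Fin p → Fin N) := by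
  simp only [replicaAvg_eq_div, smul_energyMatrix_mulVec]
  rfl

lemma gibbsAvgAbsRp_eq_integral_replicaAvg (N p : ℕ) (β : ℝ) :
    gibbsAvgAbsRp N p β = ∫ g, replicaAvg ((β • energyMatrix N p) *ᵥ g)
      (fun s t => |overlap s t| ^ p) ∂stdGaussianPi (Fin p → Fin N) := by
  simp only [replicaAvg_eq_div, smul_energyMatrix_mulVec]
  rfl

lemma integral_replicaAvg_energyMatrix_dotProduct {N : ℕ} (hN : N ≠ 0) (p : ℕ) (β : ℝ) :
    ∫ g, replicaAvg ((β • energyMatrix N p) *ᵥ g)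
      (fun s t => energyMatrix N p s ⬝ᵥ energyMatrix N p t) ∂stdGaussianPi (Fin p → Fin N)
      = N / 2 * gibbsAvgRp N p β := by
  simp only [energyMatrix_dotProduct hN, replicaAvg_const_mul, integral_const_mul,
    gibbsAvgRp_eq_integral_replicaAvg]

lemma gibbsAvgRp_le_gibbsAvgAbsRp (N p : ℕ) (β : ℝ) : gibbsAvgRp N p β ≤ gibbsAvgAbsRp N p β := by
  rw [gibbsAvgRp_eq_integral_replicaAvg, gibbsAvgAbsRp_eq_integral_replicaAvg]
  refine integral_mono (integrable_replicaAvg_mulVec _ _) (integrable_replicaAvg_mulVec _ _)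
    fun g => replicaAvg_mono _ fun s t => ?_
  rw [← abs_pow]
  exact le_abs_self _

lemma gibbsAvgRp_nonneg {N : ℕ} (hN : N ≠ 0) (p : ℕ) (β : ℝ) : 0 ≤ gibbsAvgRp N p β := by
  refine nonneg_of_mul_nonneg_right ?_ (by positivity : (0 : ℝ) < N / 2)
  rw [← integral_replicaAvg_energyMatrix_dotProduct hN]
  refine integral_nonneg fun g => ?_
  rw [replicaAvg_dotProduct]
  exact Finset.sum_nonneg fun i _ => sq_nonneg _

lemma continuous_gibbsAvgRp (N p : ℕ) : Continuous (gibbsAvgRp N p) := by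
  simp only [funext (gibbsAvgRp_eq_integral_replicaAvg N p)]
  exact continuous_integral_replicaAvg_smul_mulVec _ _

lemma memLp_freeEnergy (N p : ℕ) (β : ℝ) :
    MemLp (freeEnergy N p β) 2 (stdGaussianPi (Fin p → Fin N)) := by
  simp only [funext (freeEnergy_eq_logPartition N p β)]
  exact ((memLp_logPartition_mulVec _).sub (memLp_const _)).const_mul _

theorem variance_freeEnergy_le {N : ℕ} (hN : N ≠ 0) (p : ℕ) (β : ℝ) :
    Var[freeEnergy N p β; stdGaussianPi (Fin p → Fin N)]
      ≤ β ^ 2 / (2 * N) * gibbsAvgRp N p β := by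
  have hrows (s t : Fin N → Bool) :
      (β • energyMatrix N p) s ⬝ᵥ (β • energyMatrix N p) t
        = β ^ 2 * (energyMatrix N p s ⬝ᵥ energyMatrix N p t) := by
    rw [sq, mul_assoc, ← smul_eq_mul, ← smul_eq_mul, ← dotProduct_smul, ← smul_dotProduct]
    rfl
  have hpoincare := variance_logPartition_mulVec_le (β • energyMatrix N p)
  simp only [hrows, replicaAvg_const_mul, integral_const_mul,
    integral_replicaAvg_energyMatrix_dotProduct hN] at hpoincare
  simp only [funext (freeEnergy_eq_logPartition N p β)]
  rw [variance_const_mul, variance_sub_const (memLp_logPartition_mulVec _).1]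
  calc _ ≤ (N : ℝ)⁻¹ ^ 2 * (β ^ 2 * (N / 2 * gibbsAvgRp N p β)) := by gcongr
    _ = _ := by field_simp

theorem integral_freeEnergy {N : ℕ} (hN : N ≠ 0) (p : ℕ) (β : ℝ) :
    ∫ g, freeEnergy N p β g ∂stdGaussianPi (Fin p → Fin N)
      = β ^ 2 / 4 - (∫ l in (0)..β, l * gibbsAvgRp N p l) / 2 := by
  simp only [freeEnergy_eq_logPartition]
  rw [integral_const_mul,
    integral_sub ((memLp_logPartition_mulVec _).integrable one_le_two) (integrable_const _),
    integral_logPartition_smul_mulVec (energyMatrix_dotProduct_self hN p)]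
  simp only [integral_replicaAvg_energyMatrix_dotProduct hN, mul_left_comm _ ((N : ℝ) / 2),
    intervalIntegral.integral_const_mul, integral_const, probReal_univ, one_smul]
  field_simp
  ring

theorem disorder_freeEnergy_deviation_le {N : ℕ} (hN : N ≠ 0) (p : ℕ) (β : ℝ) {r : ℝ}
    (hr : 0 < r) :
    (disorder N p).real {g | r ≤ |freeEnergy N p β g - β ^ 2 / 4|}
      ≤ (β ^ 2 / (2 * N) * gibbsAvgRp N p β
        + (∫ l in (0)..β, l * gibbsAvgRp N p l) ^ 2 / 4) / r ^ 2 := by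
  refine (measureReal_ge_le_variance_add_sq_div_sq (memLp_freeEnergy N p β) _ hr).trans ?_
  refine div_le_div_of_nonneg_right (add_le_add (variance_freeEnergy_le hN p β) (le_of_eq ?_))
    (sq_nonneg r)
  rw [integral_freeEnergy hN]
  ring

theorem abs_integral_mul_gibbsAvgRp_le {N : ℕ} (hN : N ≠ 0) (p : ℕ) {β C : ℝ} (hβ : 0 ≤ β)
    (hC : ∀ l ∈ Set.Icc 0 β, gibbsAvgRp N p l ≤ C) :
    |∫ l in (0)..β, l * gibbsAvgRp N p l| ≤ C * β ^ 2 / 2 := by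
  have hcont := continuous_gibbsAvgRp N p
  rw [abs_of_nonneg (intervalIntegral.integral_nonneg hβ fun l hl =>
    mul_nonneg hl.1 (gibbsAvgRp_nonneg hN p l))]
  calc ∫ l in (0)..β, l * gibbsAvgRp N p l ≤ ∫ l in (0)..β, l * C :=
        intervalIntegral.integral_mono_on hβ (Continuous.intervalIntegrable (by fun_prop) _ _)
          (Continuous.intervalIntegrable (by fun_prop) _ _)
          fun l hl => mul_le_mul_of_nonneg_left (hC l hl) hl.1
    _ = C * β ^ 2 / 2 := by
        rw [intervalIntegral.integral_mul_const, integral_id]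
        ring

end PureSpinModel

theorem stmt16_general {N p : ℕ} (hN : 1 ≤ N) (hp : 2 ≤ p) {b K : ℝ}
    (h : ∀ l ∈ Set.Icc (0 : ℝ) b, gibbsAvgRp N p l ≤ K / (N : ℝ) ^ ((p : ℝ) / 2))
    {β r : ℝ} (hβ : β ∈ Set.Icc (0 : ℝ) b) (hr : 0 < r) :
    ((disorder N p) {g | r ≤ |freeEnergy N p β g - β ^ 2 / 4|}).toReal
      ≤ (b ^ 2 * K / 2 + b ^ 4 * K ^ 2 / 16) / (r ^ 2 * (N : ℝ) ^ ((p : ℝ) / 2 + 1)) := by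
  have hN0 : N ≠ 0 := Nat.one_le_iff_ne_zero.1 hN
  have hNpos : (0 : ℝ) < N := by positivity
  rw [Real.rpow_add_one hNpos.ne']
  have hNX : (N : ℝ) ≤ (N : ℝ) ^ ((p : ℝ) / 2) := by
    refine Real.self_le_rpow_of_one_le (by exact_mod_cast hN) ?_
    rw [one_le_div two_pos]
    exact_mod_cast hp
  set X := (N : ℝ) ^ ((p : ℝ) / 2)
  have hXpos : 0 < X := hNpos.trans_le hNX
  have hK : 0 ≤ K := by
    simpa only [div_mul_cancel₀ _ hXpos.ne'] using
      mul_nonneg ((gibbsAvgRp_nonneg hN0 p β).trans (h β hβ)) hXpos.le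
  have hmean : (∫ l in (0)..β, l * gibbsAvgRp N p l) ^ 2 ≤ (K / X * b ^ 2 / 2) ^ 2 := by
    rw [← sq_abs]
    gcongr
    refine (abs_integral_mul_gibbsAvgRp_le hN0 p hβ.1
      fun l hl => h l ⟨hl.1, hl.2.trans hβ.2⟩).trans ?_
    gcongr
    exacts [hβ.1, hβ.2]
  calc _ ≤ (b ^ 2 / (2 * N) * (K / X) + (K / X * b ^ 2 / 2) ^ 2 / 4) / r ^ 2 := by
        refine (disorder_freeEnergy_deviation_le hN0 p β hr).trans ?_
        gcongr
        exacts [gibbsAvgRp_nonneg hN0 p β, hβ.1, hβ.2, h β hβ]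
    _ = (b ^ 2 * K / 2 + b ^ 4 * K ^ 2 / 16 * (N / X)) / (r ^ 2 * (X * N)) := by
        field_simp
        ring
    _ ≤ (b ^ 2 * K / 2 + b ^ 4 * K ^ 2 / 16 * 1) / (r ^ 2 * (X * N)) := by
        gcongr
        exact (div_le_one hXpos).2 hNX
    _ = _ := by rw [mul_one]

/-- If `E⟨|R_{1,2}|^p⟩_β ≤ K/N^(p/2)` for all `N ≥ 1` and `β ∈ [0,b]`, then there is a
constant `K'` with `P(|F_N(β) - β²/4| ≥ r) ≤ K'/(r² N^(p/2+1))` for all such `β`,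
all `r > 0` and all `N ≥ 1`. -/
theorem stmt16 (p : ℕ) (hp : 3 ≤ p) (b K : ℝ) (hb : 0 < b) (hK : 0 ≤ K)
    (h : ∀ N : ℕ, 1 ≤ N → ∀ β ∈ Set.Icc (0:ℝ) b,
      gibbsAvgAbsRp N p β ≤ K / (N:ℝ) ^ ((p:ℝ) / 2)) :
    ∃ K' : ℝ, ∀ β ∈ Set.Icc (0:ℝ) b, ∀ r : ℝ, 0 < r → ∀ N : ℕ, 1 ≤ N →
      ((disorder N p) {g | r ≤ |freeEnergy N p β g - β ^ 2 / 4|}).toReal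
        ≤ K' / (r ^ 2 * (N:ℝ) ^ ((p:ℝ) / 2 + 1)) :=
  ⟨_, fun _ hβ _ hr N hN => stmt16_general hN (le_of_lt hp)
    (fun l hl => (gibbsAvgRp_le_gibbsAvgAbsRp N p l).trans (h N hN l hl)) hβ hr⟩
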